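/- G2-type Verma relation between e1 and e2 (case a21 = -3, a12 = -1 of the geometric crystal axioms in Theorem 5.3): for all c1, c2, x0,...,x5 ∈ ℝ_{>0} one has e2^{c1} ∘ e1^{c1^3 c2} ∘ e2^{c1^2 c2} ∘ e1^{c1^3 c2^2} ∘ e2^{c1 c2} ∘ e1^{c2} (x) = e1^{c2} ∘ e2^{c1 c2} ∘ e1^{c1^3 c2^2} ∘ e2^{c1^2 c2} ∘ e1^{c1^3 c2} ∘ e2^{c1} (x). -/

import Mathlib

noncomputable section

/-- the action `e1^c` on `(x0,...,x5)` -/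
def e1act (c : ℝ) (x : Fin 6 → ℝ) : Fin 6 → ℝ :=
  let x0 := x 0; let x1 := x 1; let x2 := x 2; let x3 := x 3; let x4 := x 4; let x5 := x 5
  let A1 := x0/x1 + x0*x2^3/(x1^2*x3) + x0*x2^3*x4^3/(x1^2*x3^2*x5)
  let B1 := c*x0/x1 + x0*x2^3/(x1^2*x3) + x0*x2^3*x4^3/(x1^2*x3^2*x5)
  let B3 := c*x0/x1 + c*x0*x2^3/(x1^2*x3) + x0*x2^3*x4^3/(x1^2*x3^2*x5)
  ![x0, (B1/A1)*x1, x2, (B3/B1)*x3, x4, (c*A1/B3)*x5]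

/-- the action `e2^c` on `(x0,...,x5)` -/
def e2act (c : ℝ) (x : Fin 6 → ℝ) : Fin 6 → ℝ :=
  let x0 := x 0; let x1 := x 1; let x2 := x 2; let x3 := x 3; let x4 := x 4; let x5 := x 5
  let A2 := x1/x2 + x1*x3/(x2^2*x4)
  let B2 := c*x1/x2 + x1*x3/(x2^2*x4)
  ![x0, x1, (B2/A2)*x2, x3, (c*A2/B2)*x4, x5]

end

lemma e1act_eq_of_ratio {c x0 x1 x2 x3 x4 x5 a f ρ τ : ℝ} (h0 : 0 < x0) (h1 : 0 < x1)
    (h3 : 0 < x3) (h5 : 0 < x5) (ha : 0 < a) (hf : 0 < f) (hρ : 0 < ρ) (hτ : 0 < τ)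
    (hax : x2^3 = a * (x1 * x3)) (hfx : x2^3 * x4^3 = f * (x1 * x3^2 * x5))
    (h₁ : ρ * (1 + a + f) = c + a + f) (h₃ : τ * (1 + a + f) = c + c * a + f) :
    e1act c ![x0, x1, x2, x3, x4, x5] = ![x0, ρ * x1, x2, τ / ρ * x3, x4, c / τ * x5] := by
  have hA : x0/x1 + x0*x2^3/(x1^2*x3) + x0*x2^3*x4^3/(x1^2*x3^2*x5)
      = x0 / x1 * (1 + a + f) := by
    rw [mul_assoc x0 (x2^3), hfx, hax]; field_simp
  have hB : c*x0/x1 + x0*x2^3/(x1^2*x3) + x0*x2^3*x4^3/(x1^2*x3^2*x5)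
      = x0 / x1 * (ρ * (1 + a + f)) := by
    rw [h₁, mul_assoc x0 (x2^3), hfx, hax]; field_simp
  have hC : c*x0/x1 + c*x0*x2^3/(x1^2*x3) + x0*x2^3*x4^3/(x1^2*x3^2*x5)
      = x0 / x1 * (τ * (1 + a + f)) := by
    rw [h₃, mul_assoc x0 (x2^3), hfx, mul_assoc c x0 (x2^3), hax]; field_simp
  have hT : 1 + a + f ≠ 0 := by positivity
  have e : e1act c ![x0, x1, x2, x3, x4, x5] =
      ![x0, (x0 / x1 * (ρ * (1 + a + f))) / (x0 / x1 * (1 + a + f)) * x1, x2,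
        (x0 / x1 * (τ * (1 + a + f))) / (x0 / x1 * (ρ * (1 + a + f))) * x3, x4,
        c * (x0 / x1 * (1 + a + f)) / (x0 / x1 * (τ * (1 + a + f))) * x5] := by
    rw [← hA, ← hB, ← hC]; rfl
  rw [e]
  congr! 2
  · field_simp
  congr! 2
  · field_simp
  congr! 2
  field_simp

lemma e2act_eq_of_ratio {c x0 x1 x2 x3 x4 x5 f ρ : ℝ} (h1 : 0 < x1) (h2 : 0 < x2)
    (h4 : 0 < x4) (hf : 0 < f) (hρ : 0 < ρ) (hfx : x3 = f * (x2 * x4))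
    (h : ρ * (1 + f) = c + f) :
    e2act c ![x0, x1, x2, x3, x4, x5] = ![x0, x1, ρ * x2, x3, c / ρ * x4, x5] := by
  have hA : x1/x2 + x1*x3/(x2^2*x4) = x1 / x2 * (1 + f) := by
    rw [hfx]; field_simp
  have hB : c*x1/x2 + x1*x3/(x2^2*x4) = x1 / x2 * (ρ * (1 + f)) := by
    rw [h, hfx]; field_simp
  have hT : 1 + f ≠ 0 := by positivity
  have e : e2act c ![x0, x1, x2, x3, x4, x5] =
      ![x0, x1, (x1 / x2 * (ρ * (1 + f))) / (x1 / x2 * (1 + f)) * x2, x3,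
        c * (x1 / x2 * (1 + f)) / (x1 / x2 * (ρ * (1 + f))) * x4, x5] := by
    rw [← hA, ← hB]; rfl
  rw [e]
  congr! 3
  · field_simp
  congr! 2
  field_simp

/-- Positive points in the coordinates adapted to iterating `e1act` and `e2act`: the parameters
`x0 u v q d e g` are those of the starting point, and `A B P R Z M N` describe the factors by which
the coordinates have been multiplied since. -/
noncomputable def orbitPoint (x0 u v q d e g A B P R Z M N : ℝ) : Fin 6 → ℝ :=
  ![x0, u^2 * e / (q * d * v) * (P / Z), u * (B / A), d * u * v * (R / P), v * (M * A / B),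
    v^2 * q / (g * d * u) * (N * Z / R)]

section

variable {x0 u v q d e g A B P R M N c : ℝ}

/-- `e1act` moves an orbit point by an exchange of the pair `(P, R)`. -/
lemma e1act_orbitPoint {P' R' Z Z' N' l k : ℝ} (hx0 : 0 < x0) (hu : 0 < u) (hv : 0 < v) (hq : 0 < q)
    (hd : 0 < d) (he : 0 < e) (hg : 0 < g) (hA : 0 < A) (hB : 0 < B) (hP : 0 < P) (hR : 0 < R)
    (hN : 0 < N) (hP' : 0 < P') (hR' : 0 < R') (hc : 0 < c) (hk : 0 < k) (hl : 0 < l)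
    (hkl : l * k = 1) (hMN : M^3 = l * N) (hN' : N' = c * N)
    (hZ : Z = g * P + c * k * e * R) (hZ' : Z' = g * P' + k * e * R')
    (h₁ : R * P' = l * A^3 + q * B^3) (h₃ : P * R' = l * A^3 + c * q * B^3) :
    e1act c (orbitPoint x0 u v q d e g A B P R Z M N) =
      orbitPoint x0 u v q d e g A B P' R' Z' M N' := by
  have hZpos : 0 < Z := by rw [hZ]; positivity
  have hZpos' : 0 < Z' := by rw [hZ']; positivity
  subst hN'
  have hT : 1 + q * B^3 * Z / (e * A^3 * R) + g * l * P / (e * R) = P * Z' / (e * A^3) := by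
    field_simp
    rw [hZ, hZ']
    linear_combination (-g * P) * h₁ - e * k * R * h₃ - e * R * A^3 * hkl
  have hS : c + q * B^3 * Z / (e * A^3 * R) + g * l * P / (e * R) = Z * P' / (e * A^3) := by
    field_simp
    rw [hZ]
    linear_combination (-g * P - c * k * e * R) * h₁ - c * e * R * A^3 * hkl
  have hU : c + c * (q * B^3 * Z / (e * A^3 * R)) + g * l * P / (e * R)
      = Z * P * R' / (e * A^3 * R) := by
    field_simp
    rw [hZ]
    linear_combination (-g * P - c * k * e * R) * h₃ - c * e * R * A^3 * hkl
  unfold orbitPoint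
  rw [e1act_eq_of_ratio (a := q * B^3 * Z / (e * A^3 * R)) (f := g * l * P / (e * R))
    (ρ := Z * P' / (P * Z')) (τ := Z * R' / (R * Z'))]
  · congr! 2
    · field_simp
    congr! 2
    · field_simp
    congr! 2
    field_simp
  any_goals positivity
  · field_simp
  · field_simp
    linear_combination hMN
  · rw [hT, hS]; field_simp
  · rw [hT, hU]; field_simp

/-- `e2act` moves an orbit point by an exchange of the pair `(A, B)`. -/
lemma e2act_orbitPoint {A' B' Z M' : ℝ} (hu : 0 < u) (hv : 0 < v) (hq : 0 < q)
    (hd : 0 < d) (he : 0 < e) (hA : 0 < A) (hB : 0 < B) (hP : 0 < P) (hR : 0 < R)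
    (hZ : 0 < Z) (hM : 0 < M) (hA' : 0 < A') (hB' : 0 < B') (hM' : M' = c * M)
    (h₁ : B * A' = M * P + d * R) (h₂ : A * B' = c * M * P + d * R) :
    e2act c (orbitPoint x0 u v q d e g A B P R Z M N) =
      orbitPoint x0 u v q d e g A' B' P R Z M' N := by
  subst hM'
  unfold orbitPoint
  rw [e2act_eq_of_ratio (f := d * R / (M * P)) (ρ := A * B' / (B * A'))]
  · congr! 3
    · field_simp
    congr! 2
    field_simp
  any_goals positivity
  · field_simp
  · field_simp
    linear_combination (A * B') * (-h₁) + (B * A') * h₂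

/-- The factors of an orbit point matter only up to scaling. -/
lemma orbitPoint_congr {A' B' P' R' Z Z' m n : ℝ} (hm : m ≠ 0) (hn : n ≠ 0) (hA : A' = m * A)
    (hB : B' = m * B) (hP : P' = n * P) (hR : R' = n * R) (hZ : Z' = n * Z) :
    orbitPoint x0 u v q d e g A' B' P' R' Z' M N = orbitPoint x0 u v q d e g A B P R Z M N := by
  subst hA hB hP hR hZ
  unfold orbitPoint
  rw [mul_div_mul_left _ _ hn, mul_div_mul_left _ _ hm, mul_div_mul_left _ _ hn,
    mul_left_comm M, mul_div_mul_left _ _ hm, mul_left_comm N, mul_div_mul_left _ _ hn]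

end

/-! ### Exchange polynomials

`num1_w`, `num3_w`, `num2_w` and `den2_w` are, up to monomials in `s` and `t`, the polynomials in the
factors by which the coordinates `x1`, `x3` and `x2` change when the actions `e1act` and `e2act` are
applied in the order given by the word `w`, with the parameters of the Verma relation for `c1 = s`
and `c2 = t`. -/

noncomputable section

def den2_12 (q d t : ℝ) : ℝ :=
  (1 + d) +
  q*(d*t + 1)

def num2_12 (q d s t : ℝ) : ℝ :=
  d + s*t +
  q*t*(d + s)

def num1_121 (q d s t : ℝ) : ℝ :=
  s^3*t^2*(1 + d)^3 +
  q*(2*d^3*s^3*t^3 + d^3 + 3*d^2*s^3*t^3 + 3*d^2*s^3*t^2 + 3*d^2*s*t + 6*d*s^3*t^2 +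
    3*d*s^2*t^2 + 3*s^3*t^2) +
  q^2*t*(d^3*s^3*t^3 + 2*d^3 + 3*d^2*s^3*t^2 + 3*d^2*s*t + 3*d^2*s + 3*d*s^3*t + 6*d*s^2*t +
    3*s^3*t) +
  q^3*t^2*(d + s)^3

def num3_121 (q d s t : ℝ) : ℝ :=
  (1 + d)^3 +
  q*(3*d^3*t + 3*d^2*s*t + 6*d^2*t + 3*d*s^2*t^2 + 3*d*t + 3*d + s^3*t^3 + 2) +
  q^2*(3*d^3*t^2 + 6*d^2*s*t^2 + 3*d^2*t^2 + 3*d*s^2*t^3 + 3*d*s^2*t^2 + 3*d*t + 2*s^3*t^3 +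
    1) +
  q^3*t^3*(d + s)^3

def den2_1212 (q d s t : ℝ) : ℝ :=
  s^2*t*(1 + d)^3 +
  q*(2*d^3*s^2*t^2 + 2*d^2*s^3*t^2 + 3*d^2*s^2*t^2 + d^2 + d*s^4*t^3 + 3*d*s^2*t + 2*d*s*t +
    2*s^2*t) +
  q^2*t*(d + s)^2*(d*s^2*t^2 + 1)

def num2_1212 (q d s t : ℝ) : ℝ :=
  (1 + d)^2*(d + s^3*t^2) +
  q*(2*d^3*t + d^2*s^3*t^3 + 3*d^2*s*t + 2*d^2*t + 2*d*s^3*t^2 + 3*d*s^2*t^2 + d +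
    2*s^3*t^2) +
  q^2*t^2*(d + s)^3

def num1_12121 (q d s t : ℝ) : ℝ :=
  s^6*t^3*(1 + d)^6 +
  q*(1 + d)^3*(3*d^3*s^6*t^4 + d^3 + 3*d^2*s^7*t^4 + 3*d^2*s^6*t^4 + 3*d^2*s^4*t^2 +
    3*d^2*s^3*t^2 + 6*d*s^6*t^3 + 6*d*s^5*t^3 + 4*s^6*t^3) +
  q^2*(3*d^6*s^6*t^5 + 3*d^6*t + 6*d^5*s^7*t^5 + 6*d^5*s^6*t^5 + 6*d^5*s^4*t^3 +
    6*d^5*s^3*t^3 + 6*d^5*s*t + 6*d^5*t + 3*d^4*s^8*t^5 + 9*d^4*s^7*t^5 + 3*d^4*s^6*t^5 +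
    6*d^4*s^6*t^4 + 6*d^4*s^5*t^4 + 9*d^4*s^5*t^3 + 18*d^4*s^4*t^3 + 9*d^4*s^3*t^3 +
    6*d^4*s^3*t^2 + 6*d^4*s^2*t^2 + 3*d^4*s^2*t + 9*d^4*s*t + 3*d^4*t + d^3*s^9*t^6 +
    9*d^3*s^7*t^4 + 21*d^3*s^6*t^4 + 2*d^3*s^6*t^3 + 9*d^3*s^5*t^4 + 18*d^3*s^5*t^3 +
    18*d^3*s^4*t^3 + 9*d^3*s^4*t^2 + 2*d^3*s^3*t^3 + 21*d^3*s^3*t^2 + 9*d^3*s^2*t^2 + d^3 +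
    6*d^2*s^7*t^4 + 6*d^2*s^6*t^4 + 15*d^2*s^6*t^3 + 36*d^2*s^5*t^3 + 15*d^2*s^4*t^3 +
    6*d^2*s^4*t^2 + 6*d^2*s^3*t^2 + 18*d*s^6*t^3 + 18*d*s^5*t^3 + 6*s^6*t^3) +
  q^3*t^2*(d + s)^3*(d^3*s^6*t^4 + 3*d^3 + 3*d^2*s^4*t^2 + 3*d^2*s^3*t^2 + 3*d^2*s + 3*d^2 +
    6*d*s^3*t + 6*d*s^2*t + 4*s^3*t) +
  q^4*t^3*(d + s)^6

def num3_12121 (q d s t : ℝ) : ℝ :=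
  s^3*t*(1 + d)^6 +
  q*s^2*t*(1 + d)^3*(4*d^3*s*t + 6*d^2*s^2*t + 6*d^2*s*t + 3*d*s^4*t^2 + 3*d*s^3*t^2 + 3*d*s
    + 3*d + s^7*t^4 + 3*s) +
  q^2*(6*d^6*s^3*t^3 + 18*d^5*s^4*t^3 + 18*d^5*s^3*t^3 + 6*d^4*s^6*t^4 + 6*d^4*s^5*t^4 +
    15*d^4*s^5*t^3 + 36*d^4*s^4*t^3 + 15*d^4*s^3*t^3 + 6*d^4*s^3*t^2 + 6*d^4*s^2*t^2 +
    d^3*s^9*t^6 + 9*d^3*s^7*t^4 + 21*d^3*s^6*t^4 + 2*d^3*s^6*t^3 + 9*d^3*s^5*t^4 +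
    18*d^3*s^5*t^3 + 18*d^3*s^4*t^3 + 9*d^3*s^4*t^2 + 2*d^3*s^3*t^3 + 21*d^3*s^3*t^2 +
    9*d^3*s^2*t^2 + d^3 + 3*d^2*s^9*t^5 + 9*d^2*s^8*t^5 + 3*d^2*s^7*t^5 + 6*d^2*s^7*t^4 +
    6*d^2*s^6*t^4 + 9*d^2*s^6*t^3 + 18*d^2*s^5*t^3 + 9*d^2*s^4*t^3 + 6*d^2*s^4*t^2 +
    6*d^2*s^3*t^2 + 3*d^2*s^3*t + 9*d^2*s^2*t + 3*d^2*s*t + 6*d*s^9*t^5 + 6*d*s^8*t^5 +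
    6*d*s^6*t^3 + 6*d*s^5*t^3 + 6*d*s^3*t + 6*d*s^2*t + 3*s^9*t^5 + 3*s^3*t) +
  q^3*t*(d + s)^3*(4*d^3*s^3*t^3 + 6*d^2*s^4*t^3 + 6*d^2*s^3*t^3 + 3*d*s^6*t^4 + 3*d*s^5*t^4
    + 3*d*s^3*t^2 + 3*d*s^2*t^2 + 3*s^6*t^4 + 1) +
  q^4*s^3*t^5*(d + s)^6

def den2_121212 (q d s t : ℝ) : ℝ :=
  s^3*t*(1 + d)^4 +
  q*(1 + d)*(2*d^3*s^3*t^2 + 3*d^2*s^4*t^2 + 2*d^2*s^3*t^2 + d^2 + d*s^6*t^3 + 2*d*s^3*t +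
    3*d*s^2*t + 2*s^3*t) +
  q^2*t*(d + s)^3*(d*s^3*t^2 + 1)

def num2_121212 (q d s t : ℝ) : ℝ :=
  s*(1 + d)^3*(d + s^4*t^2) +
  q*(d + s)*(2*d^3*s*t + d^2*s^5*t^3 + 2*d^2*s^2*t + 3*d^2*s*t + 3*d*s^4*t^2 + 2*d*s^3*t^2 +
    d + 2*s^4*t^2) +
  q^2*s*t^2*(d + s)^4

def num1_21 (q d s : ℝ) : ℝ :=
  s^3*(1 + d)^3 +
  q*(d + s)^3

def num3_21 (q d s t : ℝ) : ℝ :=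
  (1 + d)^3 +
  q*t*(d + s)^3

def den2_212 (q d s t : ℝ) : ℝ :=
  s^2*(1 + d)^3 +
  q*(d + s)^2*(d*s^2*t + 1)

def num2_212 (q d s t : ℝ) : ℝ :=
  (1 + d)^2*(d + s^3*t) +
  q*t*(d + s)^3

def num1_2121 (q d s t : ℝ) : ℝ :=
  s^6*t^2*(1 + d)^6 +
  q*(1 + d)^3*(2*d^3*s^6*t^3 + d^3 + 3*d^2*s^7*t^3 + 3*d^2*s^4*t^2 + 3*d^2*s^3*t +
    3*d*s^6*t^2 + 6*d*s^5*t^2 + 3*s^6*t^2) +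
  q^2*t*(d + s)^3*(d^3*s^6*t^3 + 2*d^3 + 3*d^2*s^4*t^2 + 3*d^2*s^3*t + 3*d^2 + 6*d*s^3*t +
    3*d*s^2*t + 3*s^3*t) +
  q^3*t^2*(d + s)^6

def num3_2121 (q d s t : ℝ) : ℝ :=
  s^3*(1 + d)^6 +
  q*s^2*(1 + d)^3*(3*d^3*s*t + 6*d^2*s^2*t + 3*d^2*s*t + 3*d*s^4*t^2 + 3*d*s^3*t + 3*d +
    s^7*t^3 + 2*s) +
  q^2*(d + s)^3*(3*d^3*s^3*t^2 + 3*d^2*s^4*t^2 + 6*d^2*s^3*t^2 + 3*d*s^6*t^3 + 3*d*s^3*t^2 +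
    3*d*s^2*t + 2*s^6*t^3 + 1) +
  q^3*s^3*t^3*(d + s)^6

end

section

variable {q d s t : ℝ}

lemma den2_12_pos (hq : 0 < q) (hd : 0 < d) (ht : 0 < t) : 0 < den2_12 q d t := by
  unfold den2_12; positivity

lemma num2_12_pos (hq : 0 < q) (hd : 0 < d) (hs : 0 < s) (ht : 0 < t) : 0 < num2_12 q d s t := by
  unfold num2_12; positivity

lemma num1_121_pos (hq : 0 < q) (hd : 0 < d) (hs : 0 < s) (ht : 0 < t) : 0 < num1_121 q d s t := by
  unfold num1_121; positivity

lemma num3_121_pos (hq : 0 < q) (hd : 0 < d) (hs : 0 < s) (ht : 0 < t) : 0 < num3_121 q d s t := by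
  unfold num3_121; positivity

lemma den2_1212_pos (hq : 0 < q) (hd : 0 < d) (hs : 0 < s) (ht : 0 < t) : 0 < den2_1212 q d s t := by
  unfold den2_1212; positivity

lemma num2_1212_pos (hq : 0 < q) (hd : 0 < d) (hs : 0 < s) (ht : 0 < t) : 0 < num2_1212 q d s t := by
  unfold num2_1212; positivity

lemma num1_12121_pos (hq : 0 < q) (hd : 0 < d) (hs : 0 < s) (ht : 0 < t) : 0 < num1_12121 q d s t := by
  unfold num1_12121; positivity

lemma num3_12121_pos (hq : 0 < q) (hd : 0 < d) (hs : 0 < s) (ht : 0 < t) : 0 < num3_12121 q d s t := by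
  unfold num3_12121; positivity

lemma den2_121212_pos (hq : 0 < q) (hd : 0 < d) (hs : 0 < s) (ht : 0 < t) : 0 < den2_121212 q d s t := by
  unfold den2_121212; positivity

lemma num2_121212_pos (hq : 0 < q) (hd : 0 < d) (hs : 0 < s) (ht : 0 < t) : 0 < num2_121212 q d s t := by
  unfold num2_121212; positivity

lemma num1_21_pos (hq : 0 < q) (hd : 0 < d) (hs : 0 < s) : 0 < num1_21 q d s := by
  unfold num1_21; positivity

lemma num3_21_pos (hq : 0 < q) (hd : 0 < d) (hs : 0 < s) (ht : 0 < t) : 0 < num3_21 q d s t := by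
  unfold num3_21; positivity

lemma den2_212_pos (hq : 0 < q) (hd : 0 < d) (hs : 0 < s) (ht : 0 < t) : 0 < den2_212 q d s t := by
  unfold den2_212; positivity

lemma num2_212_pos (hq : 0 < q) (hd : 0 < d) (hs : 0 < s) (ht : 0 < t) : 0 < num2_212 q d s t := by
  unfold num2_212; positivity

lemma num1_2121_pos (hq : 0 < q) (hd : 0 < d) (hs : 0 < s) (ht : 0 < t) : 0 < num1_2121 q d s t := by
  unfold num1_2121; positivity

lemma num3_2121_pos (hq : 0 < q) (hd : 0 < d) (hs : 0 < s) (ht : 0 < t) : 0 < num3_2121 q d s t := by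
  unfold num3_2121; positivity

end

section

variable (q d s t : ℝ)

lemma num3_1_mul_num1_121 : (1 + q * t) * (num1_121 q d s t) =
    s^3 * t^2 * (den2_12 q d t)^3 + q * (num2_12 q d s t)^3 := by
  simp only [den2_12, num1_121, num2_12]; ring

lemma num1_1_mul_num3_121 : (1 + q) * (num3_121 q d s t) =
    (den2_12 q d t)^3 + q * (num2_12 q d s t)^3 := by
  simp only [den2_12, num2_12, num3_121]; ring

lemma num2_12_mul_den2_1212 : (num2_12 q d s t) * (den2_1212 q d s t) =
    (num1_121 q d s t) + d * s^2 * t * (num3_121 q d s t) := by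
  simp only [den2_1212, num1_121, num2_12, num3_121]; ring

lemma den2_12_mul_num2_1212 : (den2_12 q d t) * (num2_1212 q d s t) =
    (num1_121 q d s t) + d * (num3_121 q d s t) := by
  simp only [den2_12, num1_121, num2_1212, num3_121]; ring

lemma num3_121_mul_num1_12121 : (num3_121 q d s t) * (num1_12121 q d s t) =
    (den2_1212 q d s t)^3 + q * (num2_1212 q d s t)^3 := by
  simp only [den2_1212, num1_12121, num2_1212, num3_121]; ring

lemma num1_121_mul_num3_12121 : (num1_121 q d s t) * (num3_12121 q d s t) =
    (den2_1212 q d s t)^3 + q * s^3 * t * (num2_1212 q d s t)^3 := by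
  simp only [den2_1212, num1_121, num2_1212, num3_12121]; ring

lemma num2_1212_mul_den2_121212 : (num2_1212 q d s t) * (den2_121212 q d s t) =
    (num1_12121 q d s t) + d * (num3_12121 q d s t) := by
  simp only [den2_121212, num1_12121, num2_1212, num3_12121]; ring

lemma den2_1212_mul_num2_121212 : (den2_1212 q d s t) * (num2_121212 q d s t) =
    s * (num1_12121 q d s t) + d * (num3_12121 q d s t) := by
  simp only [den2_1212, num1_12121, num2_121212, num3_12121]; ring

lemma num2_2_mul_den2_212 : (d + s) * (den2_212 q d s t) =
    (num1_21 q d s) + d * s^2 * (num3_21 q d s t) := by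
  simp only [den2_212, num1_21, num3_21]; ring

lemma den2_2_mul_num2_212 : (1 + d) * (num2_212 q d s t) =
    t * (num1_21 q d s) + d * (num3_21 q d s t) := by
  simp only [num1_21, num2_212, num3_21]; ring

lemma num3_21_mul_num1_2121 : (num3_21 q d s t) * (num1_2121 q d s t) =
    t^2 * (den2_212 q d s t)^3 + q * (num2_212 q d s t)^3 := by
  simp only [den2_212, num1_2121, num2_212, num3_21]; ring

lemma num1_21_mul_num3_2121 : (num1_21 q d s) * (num3_2121 q d s t) =
    (den2_212 q d s t)^3 + q * s^3 * (num2_212 q d s t)^3 := by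
  simp only [den2_212, num1_21, num2_212, num3_2121]; ring

lemma num2_212_mul_den2_121212 : (num2_212 q d s t) * (den2_121212 q d s t) =
    (num1_2121 q d s t) + d * t * (num3_2121 q d s t) := by
  simp only [den2_121212, num1_2121, num2_212, num3_2121]; ring

lemma den2_212_mul_num2_121212 : (den2_212 q d s t) * (num2_121212 q d s t) =
    s * (num1_2121 q d s t) + d * (num3_2121 q d s t) := by
  simp only [den2_212, num1_2121, num2_121212, num3_2121]; ring

lemma num3_2121_mul_num1_12121 : (num3_2121 q d s t) * (num1_12121 q d s t) =
    (den2_121212 q d s t)^3 + q * (num2_121212 q d s t)^3 := by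
  simp only [den2_121212, num1_12121, num2_121212, num3_2121]; ring

lemma num1_2121_mul_num3_12121 : (num1_2121 q d s t) * (num3_12121 q d s t) =
    (den2_121212 q d s t)^3 + q * t * (num2_121212 q d s t)^3 := by
  simp only [den2_121212, num1_2121, num2_121212, num3_12121]; ring

end

/-- The left-hand side of the Verma relation. -/
lemma e_121212_orbitPoint {x0 u v q d e g s t : ℝ} (hx0 : 0 < x0) (hu : 0 < u)
    (hv : 0 < v) (hq : 0 < q) (hd : 0 < d) (he : 0 < e) (hg : 0 < g) (hs : 0 < s) (ht : 0 < t)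
    (hge : g + t * e = 1) :
    e2act s (e1act (s^3 * t) (e2act (s^2 * t) (e1act (s^3 * t^2) (e2act (s * t) (e1act t 
      (orbitPoint x0 u v q d e g 1 1 1 1 1 1 1)))))) =
      orbitPoint x0 u v q d e g (s^6 * t^4 * (den2_121212 q d s t)) (s^8 * t^5 * (num2_121212 q d s t)) (s^6 * t^4 * (num1_12121 q d s t)) (s^9 * t^6 * (num3_12121 q d s t)) (s^6 * t^4 * g * (num1_12121 q d s t) + s^3 * t^3 * e * (num3_12121 q d s t)) (s^4 * t^2) (s^6 * t^4) := by
  have := den2_12_pos hq hd ht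
  have := num2_12_pos hq hd hs ht
  have := num1_121_pos hq hd hs ht
  have := num3_121_pos hq hd hs ht
  have := den2_1212_pos hq hd hs ht
  have := num2_1212_pos hq hd hs ht
  have := num1_12121_pos hq hd hs ht
  have := num3_12121_pos hq hd hs ht
  have := den2_121212_pos hq hd hs ht
  have := num2_121212_pos hq hd hs ht
  rw [e1act_orbitPoint (l := 1) (k := (1)⁻¹) (P' := (1 + q)) (R' := (1 + q * t))
    (Z' := (g * (1 + q) + e * (1 + q * t))) (N' := t)]
  rotate_left
  any_goals positivity
  · field_simp
  · ring
  · ring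
  · linear_combination -hge
  · field_simp
  · ring
  · ring
  rw [e2act_orbitPoint (A' := ((den2_12 q d t))) (B' := ((num2_12 q d s t))) (M' := (s * t))]
  rotate_left
  any_goals positivity
  · ring
  · unfold den2_12; ring
  · unfold num2_12; ring
  rw [e1act_orbitPoint (l := (s^3 * t^2)) (k := ((s^3 * t^2))⁻¹) (P' := ((num1_121 q d s t))) (R' := (s^3 * t^2 * (num3_121 q d s t)))
    (Z' := (g * (num1_121 q d s t) + e * (num3_121 q d s t))) (N' := (s^3 * t^3))]
  rotate_left
  any_goals positivity
  · field_simp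
  · ring
  · ring
  · field_simp
  · field_simp
  · linear_combination num3_1_mul_num1_121 q d s t
  · linear_combination (s^3 * t^2) * num1_1_mul_num3_121 q d s t
  rw [e2act_orbitPoint (A' := (s * t * (den2_1212 q d s t))) (B' := (s^3 * t^2 * (num2_1212 q d s t))) (M' := (s^3 * t^2))]
  rotate_left
  any_goals positivity
  · ring
  · linear_combination (s * t) * num2_12_mul_den2_1212 q d s t
  · linear_combination (s^3 * t^2) * den2_12_mul_num2_1212 q d s t
  rw [e1act_orbitPoint (l := (s^6 * t^3)) (k := ((s^6 * t^3))⁻¹) (P' := (s^6 * t^4 * (num1_12121 q d s t))) (R' := (s^9 * t^6 * (num3_12121 q d s t)))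
    (Z' := (s^6 * t^4 * g * (num1_12121 q d s t) + s^3 * t^3 * e * (num3_12121 q d s t))) (N' := (s^6 * t^4))]
  rotate_left
  any_goals positivity
  · field_simp
  · ring
  · ring
  · field_simp
  · field_simp
  · linear_combination (s^9 * t^6) * num3_121_mul_num1_12121 q d s t
  · linear_combination (s^9 * t^6) * num1_121_mul_num3_12121 q d s t
  rw [e2act_orbitPoint (A' := (s^6 * t^4 * (den2_121212 q d s t))) (B' := (s^8 * t^5 * (num2_121212 q d s t))) (M' := (s^4 * t^2))]
  rotate_left
  any_goals positivity
  · ring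
  · linear_combination (s^9 * t^6) * num2_1212_mul_den2_121212 q d s t
  · linear_combination (s^9 * t^6) * den2_1212_mul_num2_121212 q d s t

/-- The right-hand side of the Verma relation. -/
lemma e_212121_orbitPoint {x0 u v q d e g s t : ℝ} (hx0 : 0 < x0) (hu : 0 < u)
    (hv : 0 < v) (hq : 0 < q) (hd : 0 < d) (he : 0 < e) (hg : 0 < g) (hs : 0 < s) (ht : 0 < t)
    (hge : g + t * e = 1) :
    e1act t (e2act (s * t) (e1act (s^3 * t^2) (e2act (s^2 * t) (e1act (s^3 * t) (e2act s 
      (orbitPoint x0 u v q d e g 1 1 1 1 1 1 1)))))) =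
      orbitPoint x0 u v q d e g (s^6 * t * (den2_121212 q d s t)) (s^8 * t^2 * (num2_121212 q d s t)) (s^15 * t^4 * (num1_12121 q d s t)) (s^18 * t^6 * (num3_12121 q d s t)) (s^15 * t^4 * g * (num1_12121 q d s t) + s^12 * t^3 * e * (num3_12121 q d s t)) (s^4 * t^2) (s^6 * t^4) := by
  have := num1_12121_pos hq hd hs ht
  have := num3_12121_pos hq hd hs ht
  have := den2_121212_pos hq hd hs ht
  have := num2_121212_pos hq hd hs ht
  have := num1_21_pos hq hd hs
  have := num3_21_pos hq hd hs ht
  have := den2_212_pos hq hd hs ht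
  have := num2_212_pos hq hd hs ht
  have := num1_2121_pos hq hd hs ht
  have := num3_2121_pos hq hd hs ht
  rw [e2act_orbitPoint (A' := (1 + d)) (B' := (d + s)) (M' := s)]
  rotate_left
  any_goals positivity
  · ring
  · ring
  · ring
  rw [e1act_orbitPoint (l := (s^3)) (k := ((s^3))⁻¹) (P' := ((num1_21 q d s))) (R' := (s^3 * (num3_21 q d s t)))
    (Z' := (g * (num1_21 q d s) + e * (num3_21 q d s t))) (N' := (s^3 * t))]
  rotate_left
  any_goals positivity
  · field_simp
  · ring
  · ring
  · field_simp; linear_combination -hge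
  · field_simp
  · unfold num1_21; ring
  · unfold num3_21; ring
  rw [e2act_orbitPoint (A' := (s * (den2_212 q d s t))) (B' := (s^3 * (num2_212 q d s t))) (M' := (s^3 * t))]
  rotate_left
  any_goals positivity
  · ring
  · linear_combination (s) * num2_2_mul_den2_212 q d s t
  · linear_combination (s^3) * den2_2_mul_num2_212 q d s t
  rw [e1act_orbitPoint (l := (s^6 * t^2)) (k := ((s^6 * t^2))⁻¹) (P' := (s^6 * (num1_2121 q d s t))) (R' := (s^9 * t^2 * (num3_2121 q d s t)))
    (Z' := (s^6 * g * (num1_2121 q d s t) + s^3 * e * (num3_2121 q d s t))) (N' := (s^6 * t^3))]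
  rotate_left
  any_goals positivity
  · field_simp
  · ring
  · ring
  · field_simp
  · field_simp
  · linear_combination (s^9) * num3_21_mul_num1_2121 q d s t
  · linear_combination (s^9 * t^2) * num1_21_mul_num3_2121 q d s t
  rw [e2act_orbitPoint (A' := (s^6 * t * (den2_121212 q d s t))) (B' := (s^8 * t^2 * (num2_121212 q d s t))) (M' := (s^4 * t^2))]
  rotate_left
  any_goals positivity
  · ring
  · linear_combination (s^9 * t) * num2_212_mul_den2_121212 q d s t
  · linear_combination (s^9 * t^2) * den2_212_mul_num2_121212 q d s t
  rw [e1act_orbitPoint (l := (s^6 * t^3)) (k := ((s^6 * t^3))⁻¹) (P' := (s^15 * t^4 * (num1_12121 q d s t))) (R' := (s^18 * t^6 * (num3_12121 q d s t)))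
    (Z' := (s^15 * t^4 * g * (num1_12121 q d s t) + s^12 * t^3 * e * (num3_12121 q d s t))) (N' := (s^6 * t^4))]
  rotate_left
  any_goals positivity
  · field_simp
  · ring
  · ring
  · field_simp
  · field_simp
  · linear_combination (s^24 * t^6) * num3_2121_mul_num1_12121 q d s t
  · linear_combination (s^24 * t^6) * num1_2121_mul_num3_12121 q d s t

/-- Every positive point is an orbit point with trivial factors. -/
lemma exists_eq_orbitPoint {t : ℝ} (ht : 0 < t) {x : Fin 6 → ℝ} (hx : ∀ i, 0 < x i) :
    ∃ x0 u v q d e g : ℝ, 0 < x0 ∧ 0 < u ∧ 0 < v ∧ 0 < q ∧ 0 < d ∧ 0 < e ∧ 0 < g ∧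
      g + t * e = 1 ∧ x = orbitPoint x0 u v q d e g 1 1 1 1 1 1 1 := by
  have h0 := hx 0
  have h1 := hx 1
  have h2 := hx 2
  have h3 := hx 3
  have h4 := hx 4
  have h5 := hx 5
  obtain ⟨a, ha⟩ : ∃ a, a = x 2^3 / (x 1 * x 3) := ⟨_, rfl⟩
  obtain ⟨b, hb⟩ : ∃ b, b = x 4^3 / (x 3 * x 5) := ⟨_, rfl⟩
  have hapos : 0 < a := by rw [ha]; positivity
  have hbpos : 0 < b := by rw [hb]; positivity
  refine ⟨x 0, x 2, x 4, a / (a * b + t), x 3 / (x 2 * x 4), 1 / (a * b + t),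
    a * b / (a * b + t), h0, h2, h4, by positivity, by positivity, by positivity, by positivity,
    by field_simp, ?_⟩
  ext i
  fin_cases i <;> simp only [orbitPoint] <;> simp
  · rw [ha]; field_simp
  · field_simp
  · rw [hb]; field_simp

/-- `G2`-type Verma relation between `e1` and `e2` (case `a21 = -3`, `a12 = -1`). -/
theorem verma_e1_e2_G2 (c1 c2 : ℝ) (hc1 : 0 < c1) (hc2 : 0 < c2)
    (x : Fin 6 → ℝ) (hx : ∀ i, 0 < x i) :
    e2act c1 (e1act (c1^3*c2) (e2act (c1^2*c2) (e1act (c1^3*c2^2) (e2act (c1*c2)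
      (e1act c2 x))))) =
    e1act c2 (e2act (c1*c2) (e1act (c1^3*c2^2) (e2act (c1^2*c2) (e1act (c1^3*c2)
      (e2act c1 x))))) := by
  obtain ⟨x0, u, v, q, d, e, g, hx0, hu, hv, hq, hd, he, hg, hge, rfl⟩ :=
    exists_eq_orbitPoint hc2 hx
  rw [e_121212_orbitPoint hx0 hu hv hq hd he hg hc1 hc2 hge,
    e_212121_orbitPoint hx0 hu hv hq hd he hg hc1 hc2 hge]
  have hm : c2^3 ≠ 0 := by positivity
  have hn : (c1^9)⁻¹ ≠ 0 := by positivity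
  apply orbitPoint_congr hm hn <;> field_simp
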